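/- arXiv:1412.5018 — 6 statements merged into one kernel-verified Lean document; each statement's English description precedes it below -/
import Mathlib

section
/- Let T⁺, T⁻ : ℝ² → Matrix (Fin 2) (Fin 2) ℝ have continuously differentiable entries and let U⁺, U⁻ : ℝ² → ℝ be continuously differentiable, with force fields F± = ∇U±. Assume the elasticity equations hold classically on each side of the interface line Γ = {x = 0}: for j ∈ {1,2}, ∂(T⁺₁ⱼ)/∂x + ∂(T⁺₂ⱼ)/∂y + F⁺ⱼ = 0 on Ω⁺ = {x > 0} and ∂(T⁻₁ⱼ)/∂x + ∂(T⁻₂ⱼ)/∂y + F⁻ⱼ = 0 on Ω⁻ = {x < 0}. Define the piecewise conservative tensor T̂ by T̂(p) = T⁺(p) + U⁺(p)·I for p ∈ Ω⁺ ∪ Γ and T̂(p) = T⁻(p) + U⁻(p)·I for p ∈ Ω⁻, and suppose T̂ is a weak solution of ∇·T̂ = 0 on ℝ², i.e. for each j ∈ {1,2} and every smooth compactly supported φ : ℝ² → ℝ, ∫_{ℝ²} (∂φ/∂x · T̂₁ⱼ + ∂φ/∂y · T̂₂ⱼ) dV = 0. Then the traction of T satisfies the jump condition [T·n] = 𝐓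 on Γ with n = (1,0) and 𝐓 = [(T − T̂)·n]: explicitly, for every y ∈ ℝ and j ∈ {1,2}, T⁺₁ⱼ(0,y) − T⁻₁ⱼ(0,y) = −(U⁺(0,y) − U⁻(0,y))·δ₁ⱼ, where δ₁ⱼ is the Kronecker delta. -/
/-!
On each side of the interface the elasticity equation says that the `j`-th column `(A, B)` of
`T + U·I` is classically divergence-free. Integrating `∇·(φ A, φ B) = ∇φ · (A, B)` over a rectangle
having one edge on the interface and containing the support of `φ` on that side
(`integral_box`) leaves only the edge integral `∫ φ(0,y) A(0,y) dy`, with opposite signs on the two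
sides (`integral_right`, `integral_left`). Weak solvability thus becomes
`∫ φ(0,y) (A⁺ - A⁻)(0,y) dy = 0` for every test function. Taking `φ(x,y) = β(x) g(y)` with `β` a bump
function equal to `1` at `0` makes `φ(0,·)` an arbitrary test function on the line, so the continuous
function `(A⁺ - A⁻)(0,·)` vanishes identically.
-/

open MeasureTheory

/-- The divergence theorem for `φ • (A, B)`, with `(A, B)` divergence-free on the open strip
`a < x < b`, over a rectangle `[a, b] × [-R, R]` on whose horizontal edges `φ` vanishes. -/
lemma integral_box {A B φ : ℝ × ℝ → ℝ} (hA : ContDiff ℝ 1 A) (hB : ContDiff ℝ 1 B)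
    (hφ : ContDiff ℝ 1 φ) {a b R : ℝ} (hab : a ≤ b) (hR : 0 ≤ R)
    (hdiv : ∀ p : ℝ × ℝ, a < p.1 → p.1 < b → fderiv ℝ A p (1, 0) + fderiv ℝ B p (0, 1) = 0)
    (htop : ∀ x, φ (x, R) = 0) (hbot : ∀ x, φ (x, -R) = 0) :
    ∫ p in Set.Icc (a, -R) (b, R), (fderiv ℝ φ p (1, 0) * A p + fderiv ℝ φ p (0, 1) * B p)
      = (∫ y in (-R)..R, φ (b, y) * A (b, y)) - ∫ y in (-R)..R, φ (a, y) * A (a, y) := by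
  have cA := hA.continuous
  have cB := hB.continuous
  have cφ := hφ.continuous
  have cA' := hA.continuous_fderiv one_ne_zero
  have cB' := hB.continuous_fderiv one_ne_zero
  have cφ' := hφ.continuous_fderiv one_ne_zero
  have dA := hA.differentiable one_ne_zero
  have dB := hB.differentiable one_ne_zero
  have dφ := hφ.differentiable one_ne_zero
  have key := integral_divergence_prod_Icc_of_hasFDerivAt_of_le
    (fun p => φ p * A p) (fun p => φ p * B p)
    (fun p => φ p • fderiv ℝ A p + A p • fderiv ℝ φ p)
    (fun p => φ p • fderiv ℝ B p + B p • fderiv ℝ φ p)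
    (a, -R) (b, R) ⟨hab, by simpa using by linarith⟩
    (cφ.mul cA).continuousOn (cφ.mul cB).continuousOn
    (fun p _ => (dφ p).hasFDerivAt.mul (dA p).hasFDerivAt)
    (fun p _ => (dφ p).hasFDerivAt.mul (dB p).hasFDerivAt)
    (Continuous.integrableOn_Icc (by fun_prop))
  simp only [htop, hbot, zero_mul, intervalIntegral.integral_zero, sub_zero, zero_add] at key
  rw [← key]
  -- The divergence is only controlled on the open strip; its two boundary lines are null sets.
  have ha : ∀ᵐ p : ℝ × ℝ, p.1 ≠ a :=
    Measure.quasiMeasurePreserving_fst.ae (Measure.ae_ne volume a)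
  have hb : ∀ᵐ p : ℝ × ℝ, p.1 ≠ b :=
    Measure.quasiMeasurePreserving_fst.ae (Measure.ae_ne volume b)
  refine setIntegral_congr_ae measurableSet_Icc ?_
  filter_upwards [ha, hb] with p hpa hpb hp
  have h := hdiv p (lt_of_le_of_ne hp.1.1 hpa.symm) (lt_of_le_of_ne hp.2.1 hpb)
  simp only [add_apply, smul_apply, smul_eq_mul]
  linear_combination -(φ p) * h

/-- A compactly supported function on the plane vanishes, together with its derivative, outside
some centred square. -/
lemma exists_square {φ : ℝ × ℝ → ℝ} (hs : HasCompactSupport φ) :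
    ∃ R : ℝ, 0 < R ∧ ∀ p : ℝ × ℝ, R ≤ |p.1| ∨ R ≤ |p.2| → φ p = 0 ∧ fderiv ℝ φ p = 0 := by
  obtain ⟨R, hR, hsub⟩ := hs.isCompact.isBounded.subset_ball_lt 0 0
  refine ⟨R, hR, fun p hp => ?_⟩
  have hp' : p ∉ tsupport φ := fun h => by
    have h1 := hsub h
    rw [mem_ball_zero_iff, Prod.norm_def, max_lt_iff, Real.norm_eq_abs, Real.norm_eq_abs] at h1
    rcases hp with hp | hp <;> linarith [h1.1, h1.2]
  exact ⟨image_eq_zero_of_notMem_tsupport hp', fderiv_of_notMem_tsupport ℝ hp'⟩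

lemma intervalIntegral_eq_integral {f : ℝ → ℝ} {R : ℝ} (hR : 0 < R)
    (hf : ∀ y, R ≤ |y| → f y = 0) : ∫ y in (-R)..R, f y = ∫ y, f y := by
  rw [intervalIntegral.integral_of_le (by linarith)]
  refine setIntegral_eq_integral_of_forall_compl_eq_zero fun y hy => hf y ?_
  by_contra! h
  exact hy ⟨(abs_lt.1 h).1, (abs_lt.1 h).2.le⟩

lemma integral_right {A B φ : ℝ × ℝ → ℝ} (hA : ContDiff ℝ 1 A) (hB : ContDiff ℝ 1 B)
    (hφ : ContDiff ℝ 1 φ) (hs : HasCompactSupport φ)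
    (hdiv : ∀ p : ℝ × ℝ, 0 < p.1 → fderiv ℝ A p (1, 0) + fderiv ℝ B p (0, 1) = 0) :
    ∫ p in {p : ℝ × ℝ | 0 ≤ p.1}, (fderiv ℝ φ p (1, 0) * A p + fderiv ℝ φ p (0, 1) * B p)
      = -∫ y, φ (0, y) * A (0, y) := by
  obtain ⟨R, hR, h0⟩ := exists_square hs
  have habs : R ≤ |R| := le_abs_self R
  have habs' : R ≤ |-R| := by rwa [abs_neg]
  rw [setIntegral_eq_of_subset_of_forall_sdiff_eq_zero (s := Set.Icc ((0 : ℝ), -R) (R, R))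
      (measurableSet_le measurable_const measurable_fst) (fun p hp => hp.1.1) ?_,
    integral_box hA hB hφ hR.le hR.le (fun p h _ => hdiv p h)
      (fun x => (h0 _ (Or.inr habs)).1) (fun x => (h0 _ (Or.inr habs')).1)]
  · rw [intervalIntegral_eq_integral (f := fun y => φ (0, y) * A (0, y)) hR
      fun y hy => by simp [(h0 (0, y) (Or.inr hy)).1]]
    have : ∀ y, φ (R, y) = 0 := fun y => (h0 (R, y) (Or.inl habs)).1
    simp [this]
  · rintro p ⟨hp, hp'⟩
    have : R ≤ |p.1| ∨ R ≤ |p.2| := by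
      by_contra! h
      exact hp' ⟨⟨hp, (abs_lt.1 h.2).1.le⟩, ⟨(abs_lt.1 h.1).2.le, (abs_lt.1 h.2).2.le⟩⟩
    simp [(h0 p this).2]

lemma integral_left {A B φ : ℝ × ℝ → ℝ} (hA : ContDiff ℝ 1 A) (hB : ContDiff ℝ 1 B)
    (hφ : ContDiff ℝ 1 φ) (hs : HasCompactSupport φ)
    (hdiv : ∀ p : ℝ × ℝ, p.1 < 0 → fderiv ℝ A p (1, 0) + fderiv ℝ B p (0, 1) = 0) :
    ∫ p in {p : ℝ × ℝ | p.1 < 0}, (fderiv ℝ φ p (1, 0) * A p + fderiv ℝ φ p (0, 1) * B p)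
      = ∫ y, φ (0, y) * A (0, y) := by
  obtain ⟨R, hR, h0⟩ := exists_square hs
  have habs : R ≤ |R| := le_abs_self R
  have habs' : R ≤ |-R| := by rwa [abs_neg]
  have hae : {p : ℝ × ℝ | p.1 < 0} =ᵐ[volume] {p : ℝ × ℝ | p.1 ≤ 0} := by
    have h : ∀ᵐ p : ℝ × ℝ, p.1 ≠ 0 :=
      Measure.quasiMeasurePreserving_fst.ae (Measure.ae_ne volume (0 : ℝ))
    filter_upwards [h] with p hp
    exact propext ⟨fun h => le_of_lt h, fun h => lt_of_le_of_ne h hp⟩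
  rw [setIntegral_congr_set hae,
    setIntegral_eq_of_subset_of_forall_sdiff_eq_zero (s := Set.Icc (-R, -R) ((0 : ℝ), R))
      (measurableSet_le measurable_fst measurable_const) (fun p hp => hp.2.1) ?_,
    integral_box hA hB hφ (by linarith) hR.le (fun p _ h => hdiv p h)
      (fun x => (h0 _ (Or.inr habs)).1) (fun x => (h0 _ (Or.inr habs')).1)]
  · rw [intervalIntegral_eq_integral (f := fun y => φ (0, y) * A (0, y)) hR
      fun y hy => by simp [(h0 (0, y) (Or.inr hy)).1]]
    have : ∀ y, φ (-R, y) = 0 := fun y => (h0 (-R, y) (Or.inl habs')).1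
    simp [this]
  · rintro p ⟨hp, hp'⟩
    have : R ≤ |p.1| ∨ R ≤ |p.2| := by
      by_contra! h
      exact hp' ⟨⟨(abs_lt.1 h.1).1.le, (abs_lt.1 h.2).1.le⟩, ⟨hp, (abs_lt.1 h.2).2.le⟩⟩
    simp [(h0 p this).2]

lemma integrable_flux {A B φ : ℝ × ℝ → ℝ} (hA : Continuous A) (hB : Continuous B)
    (hφ : ContDiff ℝ 1 φ) (hs : HasCompactSupport φ) :
    Integrable fun p : ℝ × ℝ => fderiv ℝ φ p (1, 0) * A p + fderiv ℝ φ p (0, 1) * B p := by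
  have cφ' := hφ.continuous_fderiv one_ne_zero
  exact Continuous.integrable_of_hasCompactSupport (by fun_prop)
    (((hs.fderiv_apply (𝕜 := ℝ) (1, 0)).mul_right).add
      ((hs.fderiv_apply (𝕜 := ℝ) (0, 1)).mul_right))

/-- A piecewise `C¹` vector field, divergence-free on each side of the line `x = 0` and weakly
divergence-free across it, has continuous normal component on that line. -/
lemma normal_component_continuous {Ap Bp Am Bm : ℝ × ℝ → ℝ}
    (hAp : ContDiff ℝ 1 Ap) (hBp : ContDiff ℝ 1 Bp) (hAm : ContDiff ℝ 1 Am)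
    (hBm : ContDiff ℝ 1 Bm)
    (hp : ∀ p : ℝ × ℝ, 0 < p.1 → fderiv ℝ Ap p (1, 0) + fderiv ℝ Bp p (0, 1) = 0)
    (hm : ∀ p : ℝ × ℝ, p.1 < 0 → fderiv ℝ Am p (1, 0) + fderiv ℝ Bm p (0, 1) = 0)
    (hweak : ∀ φ : ℝ × ℝ → ℝ, ContDiff ℝ (⊤ : ℕ∞) φ → HasCompactSupport φ →
      ∫ p : ℝ × ℝ, (fderiv ℝ φ p (1, 0) * (if 0 ≤ p.1 then Ap p else Am p)
        + fderiv ℝ φ p (0, 1) * (if 0 ≤ p.1 then Bp p else Bm p)) = 0) (y : ℝ) :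
    Ap (0, y) = Am (0, y) := by
  have cAp := hAp.continuous
  have cAm := hAm.continuous
  have hedge : ∀ φ : ℝ × ℝ → ℝ, ContDiff ℝ (⊤ : ℕ∞) φ → HasCompactSupport φ →
      ∫ y, φ (0, y) * Ap (0, y) = ∫ y, φ (0, y) * Am (0, y) := by
    intro φ hφ hs
    have hφ1 : ContDiff ℝ 1 φ := hφ.of_le (by exact_mod_cast le_top)
    have hmeas : MeasurableSet {p : ℝ × ℝ | 0 ≤ p.1} :=
      measurableSet_le measurable_const measurable_fst
    have hcompl : {p : ℝ × ℝ | 0 ≤ p.1}ᶜ = {p : ℝ × ℝ | p.1 < 0} := by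
      ext p; simp
    classical
    have hsplit := integral_piecewise hmeas
      (integrable_flux cAp hBp.continuous hφ1 hs).integrableOn
      (integrable_flux cAm hBm.continuous hφ1 hs).integrableOn
    rw [hcompl, integral_right hAp hBp hφ1 hs hp, integral_left hAm hBm hφ1 hs hm] at hsplit
    have h := hweak φ hφ hs
    have hcongr : ∀ p : ℝ × ℝ, (fderiv ℝ φ p (1, 0) * (if 0 ≤ p.1 then Ap p else Am p)
        + fderiv ℝ φ p (0, 1) * (if 0 ≤ p.1 then Bp p else Bm p))
        = Set.piecewise {p : ℝ × ℝ | 0 ≤ p.1}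
          (fun p => fderiv ℝ φ p (1, 0) * Ap p + fderiv ℝ φ p (0, 1) * Bp p)
          (fun p => fderiv ℝ φ p (1, 0) * Am p + fderiv ℝ φ p (0, 1) * Bm p) p := by
      intro p
      by_cases h : 0 ≤ p.1 <;> simp [Set.piecewise, h]
    rw [integral_congr_ae (Filter.Eventually.of_forall hcongr), hsplit] at h
    linarith
  have hae : (fun y => Ap (0, y)) =ᵐ[volume] fun y => Am (0, y) := by
    refine ae_eq_of_integral_contDiff_smul_eq
      (Continuous.locallyIntegrable (by fun_prop)) (Continuous.locallyIntegrable (by fun_prop))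
      fun g hg hgs => ?_
    let β : ContDiffBump (0 : ℝ) := ⟨1, 2, one_pos, one_lt_two⟩
    have hβ : β 0 = 1 := β.one_of_mem_closedBall (by simp [β])
    have h := hedge (fun p => β p.1 * g p.2)
      ((β.contDiff.comp contDiff_fst).mul (hg.comp contDiff_snd)) ?_
    · simpa [hβ] using h
    · refine HasCompactSupport.intro (β.hasCompactSupport.isCompact.prod hgs.isCompact)
        fun p hp => ?_
      by_contra hne
      exact hp ⟨subset_tsupport _ (left_ne_zero_of_mul hne),
        subset_tsupport _ (right_ne_zero_of_mul hne)⟩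
  exact congrFun ((Continuous.ae_eq_iff_eq volume (by fun_prop) (by fun_prop)).1 hae) y

/-- let `T±` satisfy the elasticity equations `∇·T± + F± = 0` classically on
`Ω± = {±x > 0}` with force fields `F± = ∇U±`, and suppose the piecewise conservative tensor
`T̂ = T± + U±·I` is a weak solution of `∇·T̂ = 0` on `ℝ²`.  Then the traction of `T` on the
interface `Γ = {x = 0}` with normal `n = (1,0)` satisfies the jump condition `[T·n] = 𝐓`
with `𝐓 = [(T − T̂)·n]`: for every `y` and `j`,
`T⁺₁ⱼ(0,y) − T⁻₁ⱼ(0,y) = −(U⁺(0,y) − U⁻(0,y))·δ₁ⱼ`. -/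
theorem traction_jump_condition
    (Tp Tm : ℝ × ℝ → Matrix (Fin 2) (Fin 2) ℝ)
    (hTp : ∀ i j : Fin 2, ContDiff ℝ 1 (fun p => Tp p i j))
    (hTm : ∀ i j : Fin 2, ContDiff ℝ 1 (fun p => Tm p i j))
    (Up Um : ℝ × ℝ → ℝ) (hUp : ContDiff ℝ 1 Up) (hUm : ContDiff ℝ 1 Um)
    (Fp Fm : ℝ × ℝ → Fin 2 → ℝ)
    (hFp : ∀ p : ℝ × ℝ,
      Fp p 0 = fderiv ℝ Up p (1, 0) ∧ Fp p 1 = fderiv ℝ Up p (0, 1))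
    (hFm : ∀ p : ℝ × ℝ,
      Fm p 0 = fderiv ℝ Um p (1, 0) ∧ Fm p 1 = fderiv ℝ Um p (0, 1))
    (heqp : ∀ j : Fin 2, ∀ p : ℝ × ℝ, 0 < p.1 →
      fderiv ℝ (fun q => Tp q 0 j) p (1, 0)
        + fderiv ℝ (fun q => Tp q 1 j) p (0, 1) + Fp p j = 0)
    (heqm : ∀ j : Fin 2, ∀ p : ℝ × ℝ, p.1 < 0 →
      fderiv ℝ (fun q => Tm q 0 j) p (1, 0)
        + fderiv ℝ (fun q => Tm q 1 j) p (0, 1) + Fm p j = 0)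
    (That : ℝ × ℝ → Matrix (Fin 2) (Fin 2) ℝ)
    (hThat : ∀ p : ℝ × ℝ, That p =
      if 0 ≤ p.1 then Tp p + Up p • (1 : Matrix (Fin 2) (Fin 2) ℝ)
      else Tm p + Um p • (1 : Matrix (Fin 2) (Fin 2) ℝ))
    (hweak : ∀ j : Fin 2, ∀ φ : ℝ × ℝ → ℝ, ContDiff ℝ (⊤ : ℕ∞) φ → HasCompactSupport φ →
      ∫ p : ℝ × ℝ,
        (fderiv ℝ φ p (1, 0) * That p 0 j + fderiv ℝ φ p (0, 1) * That p 1 j) = 0) :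
    ∀ y : ℝ, ∀ j : Fin 2,
      Tp (0, y) 0 j - Tm (0, y) 0 j
        = -((Up (0, y) - Um (0, y)) * if j = 0 then (1 : ℝ) else 0) := by
  intro y j
  have hC : ∀ (T : ℝ × ℝ → Matrix (Fin 2) (Fin 2) ℝ) (U : ℝ × ℝ → ℝ),
      (∀ i j : Fin 2, ContDiff ℝ 1 (fun p => T p i j)) → ContDiff ℝ 1 U → ∀ i j : Fin 2,
      ContDiff ℝ 1 (fun p => T p i j + U p * (1 : Matrix (Fin 2) (Fin 2) ℝ) i j) :=
    fun T U hT hU i j => (hT i j).add (hU.mul contDiff_const)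
  -- Since `∇·(U·I) = ∇U = F`, the column divergence of `T + U·I` is the left side of elasticity.
  have hD : ∀ (T : ℝ × ℝ → Matrix (Fin 2) (Fin 2) ℝ) (U : ℝ × ℝ → ℝ) (F : ℝ × ℝ → Fin 2 → ℝ),
      (∀ i j : Fin 2, ContDiff ℝ 1 (fun p => T p i j)) → ContDiff ℝ 1 U →
      (∀ p, F p 0 = fderiv ℝ U p (1, 0) ∧ F p 1 = fderiv ℝ U p (0, 1)) → ∀ p : ℝ × ℝ,
      fderiv ℝ (fun p => T p 0 j + U p * (1 : Matrix (Fin 2) (Fin 2) ℝ) 0 j) p (1, 0)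
        + fderiv ℝ (fun p => T p 1 j + U p * (1 : Matrix (Fin 2) (Fin 2) ℝ) 1 j) p (0, 1)
      = fderiv ℝ (fun q => T q 0 j) p (1, 0) + fderiv ℝ (fun q => T q 1 j) p (0, 1) + F p j := by
    intro T U F hT hU hF p
    have dT := fun i => (hT i j).differentiable one_ne_zero p
    have dU := hU.differentiable one_ne_zero p
    rw [fderiv_fun_add (dT 0) (dU.mul_const _), fderiv_fun_add (dT 1) (dU.mul_const _),
      fderiv_mul_const dU, fderiv_mul_const dU]
    obtain rfl | rfl : j = 0 ∨ j = 1 := by omega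
    all_goals simp [hF p]; ring
  have key := normal_component_continuous (hC Tp Up hTp hUp 0 j) (hC Tp Up hTp hUp 1 j)
    (hC Tm Um hTm hUm 0 j) (hC Tm Um hTm hUm 1 j)
    (fun p hp => (hD Tp Up Fp hTp hUp hFp p).trans (heqp j p hp))
    (fun p hp => (hD Tm Um Fm hTm hUm hFm p).trans (heqm j p hp))
    (fun φ hφ hs => by
      refine Eq.trans (integral_congr_ae (Filter.Eventually.of_forall fun p => ?_)) (hweak j φ hφ hs)
      beta_reduce
      rw [hThat p]
      split_ifs <;> simp)
    y
  simp only [Matrix.one_apply, eq_comm (a := (0 : Fin 2))] at key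
  linear_combination key
end

section
/- Let θ ∈ ℝ satisfy sin θ ≠ 0 and cos θ ≠ 0 (i.e. θ ∉ {0, π/2, π, 3π/2, 2π}, so the local interface is neither parallel nor perpendicular to the mesh directions), let μ⁺, μ⁻, λ⁺, λ⁻ > 0, and set M⁺ = λ⁺ + 2μ⁺ and M⁻ = λ⁻ + 2μ⁻ (the p-wave moduli). Then the 4×8 real matrix whose rows are: row 1 = (−sinθ, sinθ, cosθ, −cosθ, 0, 0, 0, 0); row 2 = (0, 0, 0, 0, −sinθ, sinθ, cosθ, −cosθ); row 3 = (M⁺cosθ, −M⁻cosθ, μ⁺sinθ, −μ⁻sinθ, μ⁺sinθ, −μ⁻sinθ, λ⁺cosθ, −λ⁻cosθ); row 4 = (λ⁺sinθ, −λ⁻sinθ, μ⁺cosθ, −μ⁻cosθ, μ⁺cosθ, −μ⁻cosθ, M⁺sinθ, −M⁻sinθ), is of full rank (rank 4). -/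
open Real

/-!
It suffices to show that the four rows are linearly independent, and the columns belonging to the
`+` side alone already force this. Let `(a, b, d, e)` be the coefficients of a vanishing row
combination and `n = (cos θ, sin θ)`. Contracting the first two column equations with `n`, and
likewise the last two, eliminates `a` and `b` and leaves
`(μ I + (λ + μ) n nᵀ) (d, e)ᵀ = 0`, whose matrix is the acoustic tensor of the isotropic medium.
Its eigenvalues are `λ + 2μ` (along `n`) and `μ` (along the tangent), both positive, so
`d = e = 0`. The remaining equations then give `a = b = 0`.
-/

/-- The acoustic tensor `μ I + (l + μ) n nᵀ` of an isotropic medium, for the unit vector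
`n = (c, s)`, has trivial kernel. -/
lemma acoustic_tensor_ker {c s μ l d e : ℝ} (hn : s ^ 2 + c ^ 2 = 1) (hμ : 0 < μ) (hl : 0 < l)
    (h₁ : μ * d + (l + μ) * c * (c * d + s * e) = 0)
    (h₂ : μ * e + (l + μ) * s * (c * d + s * e) = 0) : d = 0 ∧ e = 0 := by
  -- The normal component is an eigencomponent, with eigenvalue `l + 2 * μ`.
  have h : (l + 2 * μ) * (c * d + s * e) = 0 := by
    linear_combination c * h₁ + s * h₂ - (l + μ) * (c * d + s * e) * hn
  have h0 : c * d + s * e = 0 := (mul_eq_zero.mp h).resolve_left (by positivity)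
  simpa [h0, hμ.ne'] using And.intro h₁ h₂

/-- the 4×8 coefficient matrix of the two tangential-derivative interface
conditions and the two traction interface conditions of 2D linear elasticity is of full
rank (rank 4), provided `sin θ ≠ 0` and `cos θ ≠ 0` (the local interface is neither
parallel nor perpendicular to the mesh directions), where `μ±, λ± > 0` and
`M± = λ± + 2μ±` are the p-wave moduli. -/
theorem interface_condition_matrix_full_rank
    (θ μp μm lp lm Mp Mm : ℝ)
    (hs : Real.sin θ ≠ 0) (hc : Real.cos θ ≠ 0)
    (hμp : 0 < μp) (hμm : 0 < μm) (hlp : 0 < lp) (hlm : 0 < lm)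
    (hMp : Mp = lp + 2 * μp) (hMm : Mm = lm + 2 * μm) :
    (Matrix.of
      ![![-Real.sin θ, Real.sin θ, Real.cos θ, -Real.cos θ, 0, 0, 0, 0],
        ![0, 0, 0, 0, -Real.sin θ, Real.sin θ, Real.cos θ, -Real.cos θ],
        ![Mp * Real.cos θ, -Mm * Real.cos θ, μp * Real.sin θ, -μm * Real.sin θ,
          μp * Real.sin θ, -μm * Real.sin θ, lp * Real.cos θ, -lm * Real.cos θ],
        ![lp * Real.sin θ, -lm * Real.sin θ, μp * Real.cos θ, -μm * Real.cos θ,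
          μp * Real.cos θ, -μm * Real.cos θ, Mp * Real.sin θ, -Mm * Real.sin θ]] :
      Matrix (Fin 4) (Fin 8) ℝ).rank = 4 := by
  have hn := Real.sin_sq_add_cos_sq θ
  rw [LinearIndependent.rank_matrix, Fintype.card_fin]
  rw [Fintype.linearIndependent_iff]
  intro g hg
  -- The columns of the derivatives on the `+` side.
  have e0 := congrFun hg 0
  have e2 := congrFun hg 2
  have e4 := congrFun hg 4
  have e6 := congrFun hg 6
  simp [Fin.sum_univ_four] at e0 e2 e4 e6
  subst hMp
  obtain ⟨h2, h3⟩ : g 2 = 0 ∧ g 3 = 0 :=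
    acoustic_tensor_ker hn hμp hlp
      (by linear_combination Real.cos θ * e0 + Real.sin θ * e2 - μp * g 2 * hn)
      (by linear_combination Real.cos θ * e4 + Real.sin θ * e6 - μp * g 3 * hn)
  have h0 : g 0 = 0 := by simpa [h2, h3, hc] using e2
  have h1 : g 1 = 0 := by simpa [h2, h3, hs] using e4
  intro i
  fin_cases i <;> assumption
end

section
/- Assume the four interface conditions (T1), (T2), (N1), (N2) hold. Then the following two combined interface conditions, in which the coefficients of d = ∂u₁⁻/∂y and h = ∂u₂⁻/∂y vanish, also hold: −φ·cosθ = (−M⁺cos²θ − μ⁻sin²θ)·a + (M⁻cos²θ + μ⁻sin²θ)·b + (μ⁻−μ⁺)sinθcosθ·c − (λ⁻+μ⁺)sinθcosθ·e + (λ⁻+μ⁻)sinθcosθ·f + (λ⁻−λ⁺)cos²θ·g, and −ψ·cosθ = −(λ⁺+μ⁻)sinθcosθ·a + (λ⁻+μ⁻)sinθcosθ·b + (μ⁻−μ⁺)cos²θ·c − (μ⁺cos²θ + M⁻sin²θ)·e + (μ⁻cos²θ + M⁻sin²θ)·f + (M⁻−M⁺)sinθcosθ·g. (This is the elimination of the derivatives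 ∂u₁⁻/∂y and ∂u₂⁻/∂y from the interface conditions.) -/
/-- elimination of the derivatives `d = ∂u₁⁻/∂y` and `h = ∂u₂⁻/∂y` from the
four interface conditions (T1), (T2), (N1), (N2) of 2D linear elasticity yields the two
combined interface conditions stated below. -/
theorem eliminate_d_h
    (θ φ ψ μp μm lp lm Mp Mm a b c d e f g h : ℝ)
    (hMp : Mp = lp + 2 * μp) (hMm : Mm = lm + 2 * μm)
    (hT1 : -Real.sin θ * (a - b) + Real.cos θ * (c - d) = 0)
    (hT2 : -Real.sin θ * (e - f) + Real.cos θ * (g - h) = 0)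
    (hN1 : Real.cos θ * (Mp * a - Mm * b) + Real.sin θ * (μp * c - μm * d)
      + Real.sin θ * (μp * e - μm * f) + Real.cos θ * (lp * g - lm * h) = φ)
    (hN2 : Real.sin θ * (lp * a - lm * b) + Real.cos θ * (μp * c - μm * d)
      + Real.cos θ * (μp * e - μm * f) + Real.sin θ * (Mp * g - Mm * h) = ψ) :
    (-φ * Real.cos θ
      = (-Mp * Real.cos θ ^ 2 - μm * Real.sin θ ^ 2) * a
        + (Mm * Real.cos θ ^ 2 + μm * Real.sin θ ^ 2) * b
        + (μm - μp) * Real.sin θ * Real.cos θ * c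
        - (lm + μp) * Real.sin θ * Real.cos θ * e
        + (lm + μm) * Real.sin θ * Real.cos θ * f
        + (lm - lp) * Real.cos θ ^ 2 * g)
    ∧ (-ψ * Real.cos θ
      = -(lp + μm) * Real.sin θ * Real.cos θ * a
        + (lm + μm) * Real.sin θ * Real.cos θ * b
        + (μm - μp) * Real.cos θ ^ 2 * c
        - (μp * Real.cos θ ^ 2 + Mm * Real.sin θ ^ 2) * e
        + (μm * Real.cos θ ^ 2 + Mm * Real.sin θ ^ 2) * f
        + (Mm - Mp) * Real.sin θ * Real.cos θ * g) := by
  -- Multiplying each normal condition by `cos θ` lets (T1) and (T2) replace `cos θ * d` and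
  -- `cos θ * h`; the multipliers of (T1), (T2) are what is left of the coefficients of `d`, `h`.
  constructor
  · linear_combination Real.cos θ * hN1 - μm * Real.sin θ * hT1 - lm * Real.cos θ * hT2
  · linear_combination Real.cos θ * hN2 - μm * Real.cos θ * hT1 - Mm * Real.sin θ * hT2
end

section
/- Assume the four interface conditions (T1), (T2), (N1), (N2) hold. Then the following two combined interface conditions, in which the coefficients of c = ∂u₁⁺/∂y and g = ∂u₂⁺/∂y vanish, also hold: φ·cosθ = (M⁺cos²θ + μ⁺sin²θ)·a − (M⁻cos²θ + μ⁺sin²θ)·b + (μ⁺−μ⁻)sinθcosθ·d + (μ⁺+λ⁺)sinθcosθ·e − (μ⁻+λ⁺)sinθcosθ·f + (λ⁺−λ⁻)cos²θ·h, and ψ·cosθ = (λ⁺+μ⁺)sinθcosθ·a − (λ⁻+μ⁺)sinθcosθ·b + (μ⁺−μ⁻)cos²θ·d + (μ⁺cos²θ + M⁺sin²θ)·e − (μ⁻cos²θ + M⁺sin²θ)·f + (M⁺−M⁻)sinθcosθ·h. (This is the elimination of the derivatives ∂u₁⁺/∂y and ∂u₂⁺/∂y from the interface conditions.) -/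
/-- elimination of the derivatives `c = ∂u₁⁺/∂y` and `g = ∂u₂⁺/∂y` from the
four interface conditions (T1), (T2), (N1), (N2) of 2D linear elasticity yields the two
combined interface conditions stated below. -/
theorem eliminate_c_g
    (θ φ ψ μp μm lp lm Mp Mm a b c d e f g h : ℝ)
    (hMp : Mp = lp + 2 * μp) (hMm : Mm = lm + 2 * μm)
    (hT1 : -Real.sin θ * (a - b) + Real.cos θ * (c - d) = 0)
    (hT2 : -Real.sin θ * (e - f) + Real.cos θ * (g - h) = 0)
    (hN1 : Real.cos θ * (Mp * a - Mm * b) + Real.sin θ * (μp * c - μm * d)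
      + Real.sin θ * (μp * e - μm * f) + Real.cos θ * (lp * g - lm * h) = φ)
    (hN2 : Real.sin θ * (lp * a - lm * b) + Real.cos θ * (μp * c - μm * d)
      + Real.cos θ * (μp * e - μm * f) + Real.sin θ * (Mp * g - Mm * h) = ψ) :
    (φ * Real.cos θ
      = (Mp * Real.cos θ ^ 2 + μp * Real.sin θ ^ 2) * a
        - (Mm * Real.cos θ ^ 2 + μp * Real.sin θ ^ 2) * b
        + (μp - μm) * Real.sin θ * Real.cos θ * d
        + (μp + lp) * Real.sin θ * Real.cos θ * e
        - (μm + lp) * Real.sin θ * Real.cos θ * f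
        + (lp - lm) * Real.cos θ ^ 2 * h)
    ∧ (ψ * Real.cos θ
      = (lp + μp) * Real.sin θ * Real.cos θ * a
        - (lm + μp) * Real.sin θ * Real.cos θ * b
        + (μp - μm) * Real.cos θ ^ 2 * d
        + (μp * Real.cos θ ^ 2 + Mp * Real.sin θ ^ 2) * e
        - (μm * Real.cos θ ^ 2 + Mp * Real.sin θ ^ 2) * f
        + (Mp - Mm) * Real.sin θ * Real.cos θ * h) := by
  -- Multiply (N1), (N2) by `cos θ`; the products `cos θ * c` and `cos θ * g` that then
  -- appear are rewritten by (T1) and (T2), whence the multipliers below.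
  constructor
  · linear_combination (-Real.cos θ) * hN1 + μp * Real.sin θ * hT1 + lp * Real.cos θ * hT2
  · linear_combination (-Real.cos θ) * hN2 + μp * Real.cos θ * hT1 + Mp * Real.sin θ * hT2
end

section
/- Assume the four interface conditions (T1), (T2), (N1), (N2) hold. Then the following two combined interface conditions, in which the coefficients of b = ∂u₁⁻/∂x and f = ∂u₂⁻/∂x vanish, also hold: φ·sinθ = (M⁺−M⁻)sinθcosθ·a + (μ⁺sin²θ + M⁻cos²θ)·c − (μ⁻sin²θ + M⁻cos²θ)·d + (μ⁺−μ⁻)sin²θ·e + (λ⁺+μ⁻)sinθcosθ·g − (λ⁻+μ⁻)sinθcosθ·h, and ψ·sinθ = (λ⁺−λ⁻)sin²θ·a + (μ⁺+λ⁻)sinθcosθ·c − (μ⁻+λ⁻)sinθcosθ·d + (μ⁺−μ⁻)sinθcosθ·e + (M⁺sin²θ + μ⁻cos²θ)·g − (M⁻sin²θ + μ⁻cos²θ)·h. (This is the elimination of the derivatives ∂u₁⁻/∂x and ∂u₂⁻/∂x from the interface conditions.) -/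
/-- elimination of the derivatives `b = ∂u₁⁻/∂x` and `f = ∂u₂⁻/∂x` from the
four interface conditions (T1), (T2), (N1), (N2) of 2D linear elasticity yields the two
combined interface conditions stated below. -/
theorem eliminate_b_f
    (θ φ ψ μp μm lp lm Mp Mm a b c d e f g h : ℝ)
    (hMp : Mp = lp + 2 * μp) (hMm : Mm = lm + 2 * μm)
    (hT1 : -Real.sin θ * (a - b) + Real.cos θ * (c - d) = 0)
    (hT2 : -Real.sin θ * (e - f) + Real.cos θ * (g - h) = 0)
    (hN1 : Real.cos θ * (Mp * a - Mm * b) + Real.sin θ * (μp * c - μm * d)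
      + Real.sin θ * (μp * e - μm * f) + Real.cos θ * (lp * g - lm * h) = φ)
    (hN2 : Real.sin θ * (lp * a - lm * b) + Real.cos θ * (μp * c - μm * d)
      + Real.cos θ * (μp * e - μm * f) + Real.sin θ * (Mp * g - Mm * h) = ψ) :
    (φ * Real.sin θ
      = (Mp - Mm) * Real.sin θ * Real.cos θ * a
        + (μp * Real.sin θ ^ 2 + Mm * Real.cos θ ^ 2) * c
        - (μm * Real.sin θ ^ 2 + Mm * Real.cos θ ^ 2) * d
        + (μp - μm) * Real.sin θ ^ 2 * e
        + (lp + μm) * Real.sin θ * Real.cos θ * g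
        - (lm + μm) * Real.sin θ * Real.cos θ * h)
    ∧ (ψ * Real.sin θ
      = (lp - lm) * Real.sin θ ^ 2 * a
        + (μp + lm) * Real.sin θ * Real.cos θ * c
        - (μm + lm) * Real.sin θ * Real.cos θ * d
        + (μp - μm) * Real.sin θ * Real.cos θ * e
        + (Mp * Real.sin θ ^ 2 + μm * Real.cos θ ^ 2) * g
        - (Mm * Real.sin θ ^ 2 + μm * Real.cos θ ^ 2) * h) := by
  constructor
  -- Multiply (N1), (N2) by `sin θ`; then `b` and `f` occur only as `b * sin θ` and `f * sin θ`,
  -- which (T1) and (T2) express through the other derivatives.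
  · linear_combination -Real.sin θ * hN1 - Mm * Real.cos θ * hT1 - μm * Real.sin θ * hT2
  · linear_combination -Real.sin θ * hN2 - lm * Real.sin θ * hT1 - μm * Real.cos θ * hT2
end

section
/- Assume the four interface conditions (T1), (T2), (N1), (N2) hold. Then the following two combined interface conditions, in which the coefficients of a = ∂u₁⁺/∂x and e = ∂u₂⁺/∂x vanish, also hold: −φ·sinθ = (M⁻−M⁺)sinθcosθ·b − (μ⁺sin²θ + M⁺cos²θ)·c + (μ⁻sin²θ + M⁺cos²θ)·d + (μ⁻−μ⁺)sin²θ·f − (λ⁺+μ⁺)sinθcosθ·g + (λ⁻+μ⁺)sinθcosθ·h, and −ψ·sinθ = (λ⁻−λ⁺)sin²θ·b − (μ⁺+λ⁺)sinθcosθ·c + (μ⁻+λ⁺)sinθcosθ·d + (μ⁻−μ⁺)sinθcosθ·f − (M⁺sin²θ + μ⁺cos²θ)·g + (M⁻sin²θ + μ⁺cos²θ)·h. (This is the elimination of the derivatives ∂u₁⁺/∂x and ∂u₂⁺/∂x from the interface conditions.) -/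
/-- elimination of the derivatives `a = ∂u₁⁺/∂x` and `e = ∂u₂⁺/∂x` from the
four interface conditions (T1), (T2), (N1), (N2) of 2D linear elasticity yields the two
combined interface conditions stated below. -/
theorem eliminate_a_e
    (θ φ ψ μp μm lp lm Mp Mm a b c d e f g h : ℝ)
    (hMp : Mp = lp + 2 * μp) (hMm : Mm = lm + 2 * μm)
    (hT1 : -Real.sin θ * (a - b) + Real.cos θ * (c - d) = 0)
    (hT2 : -Real.sin θ * (e - f) + Real.cos θ * (g - h) = 0)
    (hN1 : Real.cos θ * (Mp * a - Mm * b) + Real.sin θ * (μp * c - μm * d)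
      + Real.sin θ * (μp * e - μm * f) + Real.cos θ * (lp * g - lm * h) = φ)
    (hN2 : Real.sin θ * (lp * a - lm * b) + Real.cos θ * (μp * c - μm * d)
      + Real.cos θ * (μp * e - μm * f) + Real.sin θ * (Mp * g - Mm * h) = ψ) :
    (-φ * Real.sin θ
      = (Mm - Mp) * Real.sin θ * Real.cos θ * b
        - (μp * Real.sin θ ^ 2 + Mp * Real.cos θ ^ 2) * c
        + (μm * Real.sin θ ^ 2 + Mp * Real.cos θ ^ 2) * d
        + (μm - μp) * Real.sin θ ^ 2 * f
        - (lp + μp) * Real.sin θ * Real.cos θ * g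
        + (lm + μp) * Real.sin θ * Real.cos θ * h)
    ∧ (-ψ * Real.sin θ
      = (lm - lp) * Real.sin θ ^ 2 * b
        - (μp + lp) * Real.sin θ * Real.cos θ * c
        + (μm + lp) * Real.sin θ * Real.cos θ * d
        + (μm - μp) * Real.sin θ * Real.cos θ * f
        - (Mp * Real.sin θ ^ 2 + μp * Real.cos θ ^ 2) * g
        + (Mm * Real.sin θ ^ 2 + μp * Real.cos θ ^ 2) * h) := by
  -- Multiplying (N1), (N2) by `-sin θ` leaves `a` and `e` only in the products `sin θ * a`
  -- and `sin θ * e`, which (T1) and (T2) express through the other derivatives.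
  constructor
  · linear_combination Real.sin θ * hN1 + Mp * Real.cos θ * hT1 + μp * Real.sin θ * hT2
  · linear_combination Real.sin θ * hN2 + lp * Real.sin θ * hT1 + μp * Real.cos θ * hT2
end
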